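/- arXiv:2302.05352 — 2 statements merged into one kernel-verified Lean document; each statement's English description precedes it below -/
import Mathlib

section
/- Let (X, 𝒯, P, ≤, {σ_x : x ∈ X}) be a typed topological space. For any x ∈ X and p ∈ P, the type-p-connected component p⊢C(x) is type-p-connected. -/
open Set

/-- A typed topological space: a topological space `X` together with a partially
ordered set `P` of types and, for each `x : X`, a partial assignment `σ x` of
types to open sets containing `x`, such that on its domain the assignment is
order-reflecting: `σ x U ≤ σ x V ↔ U ⊆ V`. -/
structure TypedSpace (X : Type*) (P : Type*) [TopologicalSpace X] [PartialOrder P] where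
  σ : X → Set X → Option P
  dom_mem : ∀ x U p, σ x U = some p → IsOpen U ∧ x ∈ U
  mono : ∀ x U V pU pV, σ x U = some pU → σ x V = some pV → (pU ≤ pV ↔ U ⊆ V)

namespace TypedSpace

variable {X P : Type*} [TopologicalSpace X] [PartialOrder P]

/-- `U` is a type-`p` open neighborhood of `x`, written `p ⊢ U(x)`. -/
def IsNbhd (T : TypedSpace X P) (p : P) (x : X) (U : Set X) : Prop :=
  T.σ x U = some p

/-- `x` is a `p`-accumulation point of `A`: every type-`p` open neighborhood
of `x` meets `A`. -/
def IsAccPt (T : TypedSpace X P) (p : P) (A : Set X) (x : X) : Prop :=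
  ∀ U, T.IsNbhd p x U → (U ∩ A).Nonempty

/-- The direct `p`-closure `p⊢CL₁(A) = A ∪ {x : x is a p-accumulation point of A}`. -/
def CL1 (T : TypedSpace X P) (p : P) (A : Set X) : Set X :=
  A ∪ {x | T.IsAccPt p A x}

/-- Iterated `p`-closures: `p⊢CL₀(A) = A`, `p⊢CLₙ₊₁(A) = p⊢CL₁(p⊢CLₙ(A))`. -/
def CLn (T : TypedSpace X P) (p : P) : ℕ → Set X → Set X
  | 0, A => A
  | n + 1, A => T.CL1 p (T.CLn p n A)

/-- The transitive `p`-closure `p⊢tr(A) = ⋃ₙ p⊢CLₙ(A)`. -/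
def tr (T : TypedSpace X P) (p : P) (A : Set X) : Set X :=
  ⋃ n, T.CLn p n A

/-- The tracks: `p⊢Track₀(A) = A`, and `p⊢Trackᵢ(A) = p⊢CLᵢ(A) \ p⊢CLᵢ₋₁(A)` for `i ≥ 1`. -/
def Track (T : TypedSpace X P) (p : P) (i : ℕ) (A : Set X) : Set X :=
  if i = 0 then A else T.CLn p i A \ T.CLn p (i - 1) A

/-- `Umin` assigns to each point a least type-`p` open neighborhood. -/
def HasLeast (T : TypedSpace X P) (p : P) (Umin : X → Set X) : Prop :=
  ∀ x, T.IsNbhd p x (Umin x) ∧ ∀ V, T.IsNbhd p x V → Umin x ⊆ V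

/-- The type of English-text "σ has least p-neighborhood": some least neighborhood
assignment exists. -/
def HasLeastNbhd (T : TypedSpace X P) (p : P) : Prop :=
  ∃ Umin : X → Set X, T.HasLeast p Umin

/-- `A` is type-`p`-connected: there do not exist two collections of type-`p`
open neighborhoods `{p⊢U(xᵢ) : i ∈ I}`, `{p⊢V(xⱼ) : j ∈ J}` with `I, J` nonempty,
`A = {xᵢ} ∪ {xⱼ}` and `(⋃ U(xᵢ)) ∩ (⋃ V(xⱼ)) = ∅`. -/
def Connected (T : TypedSpace X P) (p : P) (A : Set X) : Prop :=
  ¬ ∃ (s t : Set X) (U V : X → Set X),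
      s.Nonempty ∧ t.Nonempty ∧ A = s ∪ t ∧
      (∀ x ∈ s, T.IsNbhd p x (U x)) ∧ (∀ y ∈ t, T.IsNbhd p y (V y)) ∧
      (⋃ x ∈ s, U x) ∩ (⋃ y ∈ t, V y) = ∅

/-- The type-`p`-connected component of `x`: the union of all type-`p`-connected
subsets containing `x`. -/
def Comp (T : TypedSpace X P) (p : P) (x : X) : Set X :=
  ⋃₀ {A : Set X | x ∈ A ∧ T.Connected p A}

/-- The space is `p`-symmetrically typed. -/
def SymTyped (T : TypedSpace X P) (p : P) : Prop :=
  ∀ x y : X, (∃ U, T.IsNbhd p x U ∧ y ∉ U) → ∃ V, T.IsNbhd p y V ∧ x ∉ V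

/-- `D` and `D'` are `p`-closure disjoint. -/
def ClosureDisjoint (T : TypedSpace X P) (p : P) (D D' : Set X) : Prop :=
  T.tr p D ∩ T.tr p D' = ∅

/-- `D` is `p`-closure connected: it cannot be partitioned into two nonempty
`p`-closure disjoint subsets. -/
def ClosureConnected (T : TypedSpace X P) (p : P) (D : Set X) : Prop :=
  ¬ ∃ E E' : Set X, E.Nonempty ∧ E'.Nonempty ∧ E ∪ E' = D ∧ E ∩ E' = ∅ ∧
      T.ClosureDisjoint p E E'

/-- The cluster `p⊢tr(x)` is straight. -/
def StraightAt (T : TypedSpace X P) (p : P) (x : X) : Prop :=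
  ∀ i j : ℕ, 0 < i → i < j → ∀ y z : X,
    y ∈ T.Track p i {x} → z ∈ T.Track p j {x} →
      y ∈ T.CL1 p {z} → z ∈ T.CL1 p {y}

/-- `X` is `p`-straight: every cluster `p⊢tr(x)` is straight. -/
def Straight (T : TypedSpace X P) (p : P) : Prop :=
  ∀ x : X, T.StraightAt p x

/-- `X` is `(p, q)`-uniformly typed. -/
def UniformlyTyped (T : TypedSpace X P) (p q : P) : Prop :=
  ∀ (x : X) (j k : ℕ), (T.CLn p j {x} ∩ T.CLn q k {x}).Nonempty →
    T.CLn p j {x} ⊆ T.CLn q k {x}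

/-- The cluster `q⊢tr(x)` is `(p,q)`-straight: for `y, z, w ∈ q⊢tr(x)` with
`z, w ∈ p⊢tr(y)`, `index_{p,y}(z) ≤ index_{p,y}(w)` implies
`index_{q,y}(z) ≤ index_{q,y}(w)` (indices being the track numbers). -/
def PQStraightAt (T : TypedSpace X P) (p q : P) (x : X) : Prop :=
  ∀ y z w : X, y ∈ T.tr q {x} → z ∈ T.tr q {x} → w ∈ T.tr q {x} →
    z ∈ T.tr p {y} → w ∈ T.tr p {y} →
    ∀ iz iw : ℕ, z ∈ T.Track p iz {y} → w ∈ T.Track p iw {y} → iz ≤ iw →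
      ∀ jz jw : ℕ, z ∈ T.Track q jz {y} → w ∈ T.Track q jw {y} → jz ≤ jw

end TypedSpace

namespace TypedSpace

variable {X P : Type*} [TopologicalSpace X] [PartialOrder P] {T : TypedSpace X P} {p : P}
  {A s t s' t' : Set X}

/-- `s` and `t` are type-`p`-separated: their points have type-`p` open neighborhoods, one family
for each set, with disjoint unions. A set is type-`p`-connected when it is not the union of two
nonempty type-`p`-separated sets. -/
def Separated (T : TypedSpace X P) (p : P) (s t : Set X) : Prop :=
  ∃ U V : X → Set X, (∀ x ∈ s, T.IsNbhd p x (U x)) ∧ (∀ y ∈ t, T.IsNbhd p y (V y)) ∧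
    Disjoint (⋃ x ∈ s, U x) (⋃ y ∈ t, V y)

theorem Separated.symm (h : T.Separated p s t) : T.Separated p t s :=
  let ⟨U, V, hU, hV, hUV⟩ := h
  ⟨V, U, hV, hU, hUV.symm⟩

theorem Separated.mono (h : T.Separated p s t) (hs : s' ⊆ s) (ht : t' ⊆ t) :
    T.Separated p s' t' :=
  let ⟨U, V, hU, hV, hUV⟩ := h
  ⟨U, V, fun x hx => hU x (hs hx), fun y hy => hV y (ht hy),
    hUV.mono (biUnion_subset_biUnion_left hs) (biUnion_subset_biUnion_left ht)⟩

theorem connected_iff_forall_separated :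
    T.Connected p A ↔ ∀ s t, T.Separated p s t → s.Nonempty → t.Nonempty → A ≠ s ∪ t := by
  constructor
  · rintro hA s t ⟨U, V, hU, hV, hUV⟩ hs ht hAst
    exact hA ⟨s, t, U, V, hs, ht, hAst, hU, hV, hUV.inter_eq⟩
  · rintro h ⟨s, t, U, V, hs, ht, hAst, hU, hV, hUV⟩
    exact h s t ⟨U, V, hU, hV, disjoint_iff_inter_eq_empty.2 hUV⟩ hs ht hAst

theorem Connected.disjoint_right_of_separated (hA : T.Connected p A) (h : T.Separated p s t)
    (hAst : A ⊆ s ∪ t) (hs : (A ∩ s).Nonempty) : Disjoint A t := by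
  by_contra ht
  refine connected_iff_forall_separated.1 hA (A ∩ s) (A ∩ t)
    (h.mono inter_subset_right inter_subset_right) hs (not_disjoint_iff_nonempty_inter.1 ht) ?_
  rw [← inter_union_distrib_left, inter_eq_left.2 hAst]

theorem connected_sUnion {S : Set (Set X)} (x : X) (hx : ∀ A ∈ S, x ∈ A)
    (hS : ∀ A ∈ S, T.Connected p A) : T.Connected p (⋃₀ S) := by
  refine connected_iff_forall_separated.2 fun s t h hs ht hst => ?_
  have hxst : x ∈ s ∪ t := by
    obtain ⟨A, hA, -⟩ := nonempty_sUnion.1 (hst ▸ hs.inl)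
    exact hst ▸ mem_sUnion_of_mem (hx A hA) hA
  wlog hxs : x ∈ s generalizing s t
  · exact this t s h.symm ht hs (union_comm s t ▸ hst) hxst.symm (hxst.resolve_left hxs)
  have hdisj : Disjoint (⋃₀ S) t := disjoint_sUnion_left.2 fun A hA =>
    (hS A hA).disjoint_right_of_separated h (hst ▸ subset_sUnion_of_mem hA) ⟨x, hx A hA, hxs⟩
  exact ht.ne_empty (hdisj.eq_bot_of_ge (hst ▸ subset_union_right))

end TypedSpace

/-- The type-p-connected component `p⊢C(x)` is type-p-connected. -/
theorem stmt_4 {X P : Type*} [TopologicalSpace X] [PartialOrder P]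
    (T : TypedSpace X P) (p : P) (x : X) :
    T.Connected p (T.Comp p x) :=
  TypedSpace.connected_sUnion x (fun _ hA => hA.1) fun _ hA => hA.2
end

section
/- Let (X, 𝒯, P, ≤, {σ_x : x ∈ X}) be a p-symmetrically typed topological space for a type p ∈ P, and suppose the assignment σ has least p-neighborhood. Then for every x ∈ X and every y ∈ p⊢tr(x), one has p⊢tr(x) = p⊢tr(y). -/
open Set

/-!
The order axiom makes `σ x` injective on its domain, so each point has at most one type-`p` open
neighborhood. Hence a `p`-accumulation point of a nonempty set `A` is already a `p`-accumulation
point of a single point of `A` (of any point of `A`, if it has no type-`p` open neighborhood),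
and `p⊢tr(x)` consists of the points reached from `x` by finite chains in which each member is a
`p`-accumulation point of the preceding one. `p`-symmetry says that the steps of such chains are
reversible, so reachability is an equivalence relation with the clusters `p⊢tr(x)` as its classes.
-/

namespace TypedSpace

variable {X P : Type*} [TopologicalSpace X] [PartialOrder P]
  {T : TypedSpace X P} {p : P} {A B U V : Set X} {x y : X}

lemma IsNbhd.eq (hU : T.IsNbhd p x U) (hV : T.IsNbhd p x V) : U = V :=
  Subset.antisymm ((T.mono x U V p p hU hV).mp le_rfl) ((T.mono x V U p p hV hU).mp le_rfl)

lemma isAccPt_singleton_iff : T.IsAccPt p {x} y ↔ ∀ U, T.IsNbhd p y U → x ∈ U := by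
  simp only [IsAccPt, inter_singleton_nonempty]

lemma SymTyped.isAccPt_singleton_symm (hsym : T.SymTyped p) (h : T.IsAccPt p {x} y) :
    T.IsAccPt p {y} x := by
  rw [isAccPt_singleton_iff] at h ⊢
  by_contra! hy
  obtain ⟨V, hV, hxV⟩ := hsym x y hy
  exact hxV (h V hV)

lemma IsAccPt.exists_singleton (hA : A.Nonempty) (h : T.IsAccPt p A x) :
    ∃ a ∈ A, T.IsAccPt p {a} x := by
  simp only [isAccPt_singleton_iff]
  by_cases hx : ∃ U, T.IsNbhd p x U
  · obtain ⟨U, hU⟩ := hx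
    obtain ⟨a, haU, haA⟩ := h U hU
    exact ⟨a, haA, fun V hV ↦ hU.eq hV ▸ haU⟩
  · obtain ⟨a, haA⟩ := hA
    exact ⟨a, haA, fun V hV ↦ absurd ⟨V, hV⟩ hx⟩

lemma IsAccPt.mono (hAB : A ⊆ B) (h : T.IsAccPt p A x) : T.IsAccPt p B x :=
  fun U hU ↦ (h U hU).mono (inter_subset_inter_right U hAB)

lemma subset_CLn (n : ℕ) : A ⊆ T.CLn p n A := by
  induction n with
  | zero => exact Subset.rfl
  | succ n ih => exact ih.trans subset_union_left

lemma exists_reflTransGen_of_mem_CLn (hA : A.Nonempty) {n : ℕ} (hy : y ∈ T.CLn p n A) :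
    ∃ a ∈ A, Relation.ReflTransGen (fun b c ↦ T.IsAccPt p {b} c) a y := by
  induction n generalizing y with
  | zero => exact ⟨y, hy, .refl⟩
  | succ n ih =>
    rcases hy with hy | hy
    · exact ih hy
    · obtain ⟨b, hb, hby⟩ := IsAccPt.exists_singleton (hA.mono (subset_CLn n)) hy
      obtain ⟨a, ha, hab⟩ := ih hb
      exact ⟨a, ha, hab.tail hby⟩

lemma subset_tr : A ⊆ T.tr p A :=
  subset_iUnion (fun n ↦ T.CLn p n A) 0

lemma mem_tr_of_isAccPt_singleton (hx : x ∈ T.tr p A) (h : T.IsAccPt p {x} y) :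
    y ∈ T.tr p A := by
  obtain ⟨n, hn⟩ := mem_iUnion.mp hx
  exact mem_iUnion.mpr ⟨n + 1, .inr (h.mono (singleton_subset_iff.mpr hn))⟩

lemma mem_tr_of_reflTransGen (hx : x ∈ T.tr p A)
    (h : Relation.ReflTransGen (fun b c ↦ T.IsAccPt p {b} c) x y) : y ∈ T.tr p A := by
  induction h with
  | refl => exact hx
  | tail _ hbc ih => exact mem_tr_of_isAccPt_singleton ih hbc

theorem mem_tr_iff_exists_reflTransGen (hA : A.Nonempty) :
    y ∈ T.tr p A ↔ ∃ a ∈ A, Relation.ReflTransGen (fun b c ↦ T.IsAccPt p {b} c) a y := by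
  constructor
  · intro hy
    obtain ⟨n, hn⟩ := mem_iUnion.mp hy
    exact exists_reflTransGen_of_mem_CLn hA hn
  · rintro ⟨a, ha, hay⟩
    exact mem_tr_of_reflTransGen (subset_tr ha) hay

theorem mem_tr_singleton_iff_reflTransGen :
    y ∈ T.tr p {x} ↔ Relation.ReflTransGen (fun b c ↦ T.IsAccPt p {b} c) x y := by
  simp only [mem_tr_iff_exists_reflTransGen (singleton_nonempty x), mem_singleton_iff,
    exists_eq_left]

theorem SymTyped.mem_tr_singleton_symm (hsym : T.SymTyped p) (hy : y ∈ T.tr p {x}) :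
    x ∈ T.tr p {y} := by
  have : Std.Symm fun b c ↦ T.IsAccPt p {b} c := ⟨fun _ _ ↦ hsym.isAccPt_singleton_symm⟩
  rw [mem_tr_singleton_iff_reflTransGen] at hy ⊢
  exact Relation.ReflTransGen.stdSymm.symm _ _ hy

theorem tr_singleton_subset_of_mem (hx : x ∈ T.tr p A) : T.tr p {x} ⊆ T.tr p A :=
  fun _ hy ↦ mem_tr_of_reflTransGen hx (mem_tr_singleton_iff_reflTransGen.mp hy)

end TypedSpace

theorem stmt_9_general {X P : Type*} [TopologicalSpace X] [PartialOrder P]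
    (T : TypedSpace X P) (p : P) (hsym : T.SymTyped p) (x y : X) (hy : y ∈ T.tr p {x}) :
    T.tr p {x} = T.tr p {y} :=
  Subset.antisymm (TypedSpace.tr_singleton_subset_of_mem (hsym.mem_tr_singleton_symm hy))
    (TypedSpace.tr_singleton_subset_of_mem hy)

/-- In a p-symmetrically typed space with least p-neighborhoods,
if `y ∈ p⊢tr(x)` then `p⊢tr(x) = p⊢tr(y)`. -/
theorem stmt_9 {X P : Type*} [TopologicalSpace X] [PartialOrder P]
    (T : TypedSpace X P) (p : P) (hsym : T.SymTyped p)
    (hleast : T.HasLeastNbhd p) (x y : X) (hy : y ∈ T.tr p {x}) :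
    T.tr p {x} = T.tr p {y} :=
  stmt_9_general T p hsym x y hy
end
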